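/- Let k ≥ 2 and n ≥ 4 be integers with n ≥ k+1, and let G be a subdivision of the complete graph K_n. Then G is k-color connectable and cc_k(G) = k. -/

import Mathlib

open SimpleGraph

/-- `c` is a `k`-color connecting edge-coloring of `G`: between every pair of distinct
vertices there is a path whose edges use at least `k` different colors. -/
def SimpleGraph.IsKColorConnecting {V : Type*} (G : SimpleGraph V) (k : ℕ)
    (c : Sym2 V → ℕ) : Prop :=
  ∀ u v : V, u ≠ v → ∃ p : G.Walk u v, p.IsPath ∧ k ≤ (p.edges.map c).toFinset.card

/-- `G` is `k`-color connectable: it admits a `k`-color connecting coloring. -/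
def SimpleGraph.KColorConnectable {V : Type*} (G : SimpleGraph V) (k : ℕ) : Prop :=
  ∃ c : Sym2 V → ℕ, G.IsKColorConnecting k c

/-- The `k`-color connection number `cc_k(G)`: the minimum number of colors used on the
edges of `G` by a `k`-color connecting coloring. -/
noncomputable def SimpleGraph.ccConn {V : Type*} (G : SimpleGraph V) (k : ℕ) : ℕ :=
  sInf {n : ℕ | ∃ c : Sym2 V → ℕ, G.IsKColorConnecting k c ∧ (c '' G.edgeSet).ncard = n}

/-- The graph obtained from `G` by subdividing the edge `uv`: delete `uv` and add a new
vertex `none` joined to `u` and `v`. -/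
def SimpleGraph.subdivideEdge {V : Type*} (G : SimpleGraph V) (u v : V) :
    SimpleGraph (Option V) :=
  ((G.deleteEdges {s(u, v)}).map Function.Embedding.some) ⊔
    SimpleGraph.fromEdgeSet {s(none, some u), s(none, some v)}

/-- `IsSubdivision G H` : `H` is (up to isomorphism) obtained from `G` by a finite,
possibly empty, sequence of single-edge subdivisions. -/
inductive IsSubdivision : ∀ {V W : Type u}, SimpleGraph V → SimpleGraph W → Prop
  | of_iso {V W : Type u} {G : SimpleGraph V} {H : SimpleGraph W} :
      Nonempty (G ≃g H) → IsSubdivision G H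
  | step {V W : Type u} {G : SimpleGraph V} {H : SimpleGraph W} (u v : V) (h : G.Adj u v) :
      IsSubdivision (G.subdivideEdge u v) H → IsSubdivision G H

/-!
Call a coloring panchromatic if every two vertices are joined by a path that sees all colors.
A panchromatic coloring survives the subdivision of an edge when both halves keep its color.

For `K_n` itself, color its spanning wheel with rim `ZMod (n - 1)`: the `i`-th spoke and the rim
edge from `i` to `i + 1` get color `i`. A path that runs along the rim from `i` to `i + d` and then
takes the spoke to the hub sees exactly the colors `i, …, i + d`. With `d = n - 2` it joins `i` to
the hub and sees all colors; two rim vertices `i` and `j` are joined through the hub by the paths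
with rim parts `i, …, j - 1` and `j, …, i - 1`. Finally the `n - 1` colors are merged into `k`.
-/

universe u

lemma isPath_append {V : Type*} {G : SimpleGraph V} {u v w : V} {p : G.Walk u v}
    {q : G.Walk v w} (hp : p.IsPath) (hq : q.IsPath)
    (hpq : ∀ x ∈ p.support, x ∈ q.support → x = v) : (p.append q).IsPath := by
  cases q with
  | nil => simpa using hp
  | cons h q =>
    rw [Walk.cons_isPath_iff] at hq
    rw [Walk.isPath_def, Walk.support_append, Walk.support_cons, List.tail_cons,
      List.nodup_append']
    refine ⟨hp.support_nodup, hq.1.support_nodup, fun x hxp hxq => hq.2 ?_⟩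
    exact hpq x hxp (by simp [hxq]) ▸ hxq

section Panchromatic

variable {V W α β : Type*} {G : SimpleGraph V} {H : SimpleGraph W}

/-- An edge-coloring is panchromatic if every two distinct vertices are joined by a path
on which every element of the color type occurs. With color type `Fin k` this is a `k`-color
connecting coloring by at most `k` colors. -/
def IsPanchromatic (G : SimpleGraph V) (c : Sym2 V → α) : Prop :=
  ∀ ⦃x y : V⦄, x ≠ y → ∃ p : G.Walk x y, p.IsPath ∧ ∀ a, a ∈ p.edges.map c

namespace IsPanchromatic

variable {c : Sym2 V → α}

lemma comp_surjective (hc : IsPanchromatic G c) {f : α → β} (hf : f.Surjective) :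
    IsPanchromatic G (f ∘ c) := by
  intro x y hxy
  obtain ⟨p, hp, hpc⟩ := hc hxy
  refine ⟨p, hp, hf.forall.mpr fun a => ?_⟩
  rw [← List.map_map]
  exact List.mem_map_of_mem (hpc a)

lemma map_equiv (hc : IsPanchromatic G c) (φ : V ≃ W) (hφ : G ≤ H.comap φ) :
    IsPanchromatic H (c ∘ Sym2.map φ.symm) := by
  intro x y hxy
  obtain ⟨x, rfl⟩ := φ.surjective x
  obtain ⟨y, rfl⟩ := φ.surjective y
  obtain ⟨p, hp, hpc⟩ := hc (ne_of_apply_ne φ hxy)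
  let f : G →g H := ⟨φ, @hφ⟩
  refine ⟨p.map f, Walk.IsPath.map (f := f) φ.injective hp, fun a => ?_⟩
  have hcolor : (c ∘ Sym2.map φ.symm) ∘ Sym2.map f = c := by
    rw [Function.comp_assoc, ← Sym2.map_comp, show φ.symm ∘ f = id from φ.symm_comp_self,
      Sym2.map_id, Function.comp_id]
  simpa only [Walk.edges_map, List.map_map, hcolor] using hpc a

lemma image_edgeSet [Nontrivial V] (hc : IsPanchromatic G c) : c '' G.edgeSet = Set.univ := by
  obtain ⟨x, y, hxy⟩ := exists_pair_ne V
  obtain ⟨p, -, hpc⟩ := hc hxy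
  refine Set.eq_univ_of_forall fun a => ?_
  obtain ⟨e, he, rfl⟩ := List.mem_map.mp (hpc a)
  exact ⟨e, p.edges_subset_edgeSet he, rfl⟩

lemma isKColorConnecting {k : ℕ} {c : Sym2 V → Fin k} (hc : IsPanchromatic G c) :
    G.IsKColorConnecting k (Fin.val ∘ c) := by
  intro x y hxy
  obtain ⟨p, hp, hpc⟩ := hc hxy
  refine ⟨p, hp, ?_⟩
  have hrange : Finset.range k ⊆ (p.edges.map (Fin.val ∘ c)).toFinset := by
    intro i hi
    rw [List.mem_toFinset, ← List.map_map]
    exact List.mem_map_of_mem (hpc ⟨i, Finset.mem_range.mp hi⟩)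
  simpa only [Finset.card_range] using Finset.card_le_card hrange

end IsPanchromatic

lemma le_ncard_of_isKColorConnecting [Nontrivial V] {k : ℕ} {c : Sym2 V → ℕ}
    (hfin : (c '' G.edgeSet).Finite) (hc : G.IsKColorConnecting k c) :
    k ≤ (c '' G.edgeSet).ncard := by
  obtain ⟨x, y, hxy⟩ := exists_pair_ne V
  obtain ⟨p, -, hp⟩ := hc x y hxy
  have hsub : ((p.edges.map c).toFinset : Set ℕ) ⊆ c '' G.edgeSet := by
    intro a ha
    obtain ⟨e, he, rfl⟩ := List.mem_map.mp (List.mem_toFinset.mp ha)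
    exact ⟨e, p.edges_subset_edgeSet he, rfl⟩
  calc k ≤ (p.edges.map c).toFinset.card := hp
    _ = ((p.edges.map c).toFinset : Set ℕ).ncard := (Set.ncard_coe_finset _).symm
    _ ≤ (c '' G.edgeSet).ncard := Set.ncard_le_ncard hsub hfin

lemma IsPanchromatic.ccConn_eq [Finite V] [Nontrivial V] {k : ℕ} {c : Sym2 V → Fin k}
    (hc : IsPanchromatic G c) : G.ccConn k = k := by
  have hcard : ((Fin.val ∘ c) '' G.edgeSet).ncard = k := by
    rw [Set.image_comp, hc.image_edgeSet, Set.ncard_image_of_injective _ Fin.val_injective,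
      Set.ncard_univ, Nat.card_fin]
  refine IsLeast.csInf_eq ⟨⟨_, hc.isKColorConnecting, hcard⟩, ?_⟩
  rintro _ ⟨c', hc', rfl⟩
  exact le_ncard_of_isKColorConnecting (Set.toFinite _) hc'

end Panchromatic

section Subdivision

variable {V α : Type*} {G : SimpleGraph V} {u v : V}

lemma subdivideEdge_adj_some_some {x y : V} (h : G.Adj x y) (hne : s(x, y) ≠ s(u, v)) :
    (G.subdivideEdge u v).Adj (some x) (some y) := by
  refine Or.inl ((SimpleGraph.map_adj ..).mpr ⟨x, y, ?_, rfl, rfl⟩)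
  simpa only [deleteEdges_adj, Set.mem_singleton_iff] using ⟨h, hne⟩

lemma subdivideEdge_adj_none_some {x : V} (hx : x ∈ s(u, v)) :
    (G.subdivideEdge u v).Adj none (some x) := by
  refine Or.inr ((fromEdgeSet_adj _).mpr ⟨?_, (Option.some_ne_none x).symm⟩)
  rcases Sym2.mem_iff.mp hx with rfl | rfl <;> simp

open Classical in
/-- The coloring of `G.subdivideEdge u v` induced by a coloring of `G`: both halves of the
subdivided edge keep its color. -/
noncomputable def subdivideColor (u v : V) (c : Sym2 V → α) (e : Sym2 (Option V)) : α :=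
  if none ∈ e then c s(u, v) else c (e.map (·.getD u))

@[simp]
lemma subdivideColor_some_some (c : Sym2 V → α) (x y : V) :
    subdivideColor u v c s(some x, some y) = c s(x, y) := by
  simp [subdivideColor]

@[simp]
lemma subdivideColor_none_left (c : Sym2 V → α) (x : Option V) :
    subdivideColor u v c s(none, x) = c s(u, v) := by
  simp [subdivideColor]

@[simp]
lemma subdivideColor_none_right (c : Sym2 V → α) (x : Option V) :
    subdivideColor u v c s(x, none) = c s(u, v) := by
  simp [subdivideColor]

open Classical in
/-- The walk of `G.subdivideEdge u v` obtained from a walk of `G` by replacing every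
traversal of the edge `uv` by the detour through the new vertex. -/
noncomputable def subdivideWalk (u v : V) :
    ∀ {x y : V}, G.Walk x y → (G.subdivideEdge u v).Walk (some x) (some y)
  | _, _, .nil => .nil
  | x, _, .cons (v := w) h p =>
    if he : s(x, w) = s(u, v) then
      .cons (subdivideEdge_adj_none_some (he ▸ Sym2.mem_mk_left x w)).symm
        (.cons (subdivideEdge_adj_none_some (he ▸ Sym2.mem_mk_right x w)) (subdivideWalk u v p))
    else .cons (subdivideEdge_adj_some_some h he) (subdivideWalk u v p)

lemma some_mem_support_subdivideWalk {x y : V} (p : G.Walk x y) {a : V} :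
    some a ∈ (subdivideWalk u v p).support ↔ a ∈ p.support := by
  induction p with
  | nil => simp [subdivideWalk]
  | cons h p ih =>
    rw [subdivideWalk]
    split_ifs <;> simp [ih]

lemma none_mem_support_subdivideWalk {x y : V} (p : G.Walk x y) :
    none ∈ (subdivideWalk u v p).support ↔ s(u, v) ∈ p.edges := by
  induction p with
  | nil => simp [subdivideWalk]
  | cons h p ih =>
    rw [subdivideWalk]
    split_ifs with he <;> simp [ih, he, eq_comm (a := s(u, v))]

lemma isPath_subdivideWalk {x y : V} {p : G.Walk x y} (hp : p.IsPath) :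
    (subdivideWalk u v p).IsPath := by
  induction p with
  | nil => simp [subdivideWalk]
  | @cons x w y h p ih =>
    rw [Walk.cons_isPath_iff] at hp
    have hx : some x ∉ (subdivideWalk u v p).support :=
      (some_mem_support_subdivideWalk p).not.mpr hp.2
    rw [subdivideWalk]
    split_ifs with he
    · have hnone : none ∉ (subdivideWalk u v p).support := by
        rw [none_mem_support_subdivideWalk, ← he]
        exact fun hmem => hp.2 (p.fst_mem_support_of_mem_edges hmem)
      exact ((ih hp.1).cons hnone).cons (by simpa using hx)
    · exact (ih hp.1).cons hx

lemma mem_map_subdivideColor_edges_subdivideWalk (c : Sym2 V → α) {x y : V} (p : G.Walk x y)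
    {a : α} :
    a ∈ (subdivideWalk u v p).edges.map (subdivideColor u v c) ↔ a ∈ p.edges.map c := by
  induction p with
  | nil => simp [subdivideWalk]
  | cons h p ih =>
    rw [subdivideWalk]
    split_ifs with he
    · simp only [Walk.edges_cons, List.map_cons, List.mem_cons, ih, he,
        subdivideColor_none_left, subdivideColor_none_right, or_self_left]
    · simp only [Walk.edges_cons, List.map_cons, List.mem_cons, ih, subdivideColor_some_some]

lemma exists_isPath_none_of_notMem_edges (c : Sym2 V → α) {x y : V} (hx : x ∈ s(u, v))
    {p : G.Walk x y} (hp : p.IsPath) (huv : s(u, v) ∉ p.edges) :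
    ∃ q : (G.subdivideEdge u v).Walk none (some y), q.IsPath ∧
      ∀ a, a ∈ q.edges.map (subdivideColor u v c) ↔ a = c s(u, v) ∨ a ∈ p.edges.map c := by
  refine ⟨.cons (subdivideEdge_adj_none_some hx) (subdivideWalk u v p),
    (isPath_subdivideWalk hp).cons ((none_mem_support_subdivideWalk p).not.mpr huv), fun a => ?_⟩
  rw [Walk.edges_cons, List.map_cons, List.mem_cons, subdivideColor_none_left,
    mem_map_subdivideColor_edges_subdivideWalk]

-- A path of `G` that starts at an end of `uv` either avoids `uv` or has it as its first edge, so
-- the new vertex can be put in front of it, respectively in place of its first vertex.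
lemma exists_isPath_none (c : Sym2 V → α) {x y : V} (hx : x ∈ s(u, v)) {p : G.Walk x y}
    (hp : p.IsPath) :
    ∃ q : (G.subdivideEdge u v).Walk none (some y), q.IsPath ∧
      ∀ a ∈ p.edges.map c, a ∈ q.edges.map (subdivideColor u v c) := by
  by_cases huv : s(u, v) ∈ p.edges
  · obtain ⟨w, hw⟩ := hx
    cases p with
    | nil => simp at huv
    | @cons _ w' _ h p =>
      obtain rfl : w = w' := hp.eq_snd_of_mem_edges (hw ▸ huv) |>.trans (p.snd_cons h)
      rw [Walk.cons_isPath_iff] at hp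
      have hnot : s(u, v) ∉ p.edges := fun hmem =>
        hp.2 (p.fst_mem_support_of_mem_edges (hw ▸ hmem))
      obtain ⟨q, hq, hqc⟩ :=
        exists_isPath_none_of_notMem_edges c (hw ▸ Sym2.mem_mk_right x w) hp.1 hnot
      refine ⟨q, hq, fun a ha => (hqc a).mpr ?_⟩
      rwa [Walk.edges_cons, List.map_cons, List.mem_cons, ← hw] at ha
  · obtain ⟨q, hq, hqc⟩ := exists_isPath_none_of_notMem_edges c hx hp huv
    exact ⟨q, hq, fun a ha => (hqc a).mpr (Or.inr ha)⟩

lemma IsPanchromatic.subdivideEdge {c : Sym2 V → α} (hc : IsPanchromatic G c) (huv : u ≠ v) :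
    IsPanchromatic (G.subdivideEdge u v) (subdivideColor u v c) := by
  have path_from_none (y : V) : ∃ q : (G.subdivideEdge u v).Walk none (some y), q.IsPath ∧
      ∀ a, a ∈ q.edges.map (subdivideColor u v c) := by
    obtain ⟨x, hx, hxy⟩ : ∃ x ∈ s(u, v), x ≠ y := by
      by_cases huy : u = y
      · exact ⟨v, Sym2.mem_mk_right u v, huy ▸ huv.symm⟩
      · exact ⟨u, Sym2.mem_mk_left u v, huy⟩
    obtain ⟨p, hp, hpc⟩ := hc hxy
    obtain ⟨q, hq, hqc⟩ := exists_isPath_none c hx hp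
    exact ⟨q, hq, fun a => hqc a (hpc a)⟩
  rintro (_ | x) (_ | y) hxy
  · exact absurd rfl hxy
  · exact path_from_none y
  · obtain ⟨q, hq, hqc⟩ := path_from_none x
    exact ⟨q.reverse, hq.reverse, by simpa using hqc⟩
  · obtain ⟨p, hp, hpc⟩ := hc (ne_of_apply_ne some hxy)
    exact ⟨subdivideWalk u v p, isPath_subdivideWalk hp,
      fun a => (mem_map_subdivideColor_edges_subdivideWalk c p).mpr (hpc a)⟩

end Subdivision

namespace IsSubdivision

variable {V W : Type u} {G : SimpleGraph V} {H : SimpleGraph W}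

lemma finite [hV : Finite V] (h : IsSubdivision G H) : Finite W := by
  revert hV
  induction h <;> intro hV
  case of_iso h => exact Finite.of_equiv _ h.some.toEquiv
  case step ih => exact ih

lemma nontrivial [hV : Nontrivial V] (h : IsSubdivision G H) : Nontrivial W := by
  revert hV
  induction h <;> intro hV
  case of_iso h => exact h.some.symm.toEquiv.nontrivial
  case step ih => exact ih

lemma exists_isPanchromatic {α : Type*} (h : IsSubdivision G H) {c : Sym2 V → α}
    (hc : IsPanchromatic G c) : ∃ c' : Sym2 W → α, IsPanchromatic H c' := by
  induction h with
  | of_iso h => exact ⟨_, hc.map_equiv h.some.toEquiv fun _ _ => h.some.map_adj_iff.mpr⟩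
  | step _ _ huv _ ih => exact ih (hc.subdivideEdge huv.ne)

end IsSubdivision

section Wheel

variable {m : ℕ}

/-- The spoke joining the rim vertex `i` of a wheel to its hub `none`. -/
def spoke (i : ZMod m) : Sym2 (Option (ZMod m)) := s(some i, none)

/-- The rim edge joining the rim vertex `i` of a wheel to its successor. -/
def rimEdge (i : ZMod m) : Sym2 (Option (ZMod m)) := s(some i, some (i + 1))

/-- The wheel with rim `ZMod m`, cyclically ordered, and hub `none`. -/
def wheelGraph (m : ℕ) : SimpleGraph (Option (ZMod m)) :=
  fromEdgeSet (Set.range spoke ∪ Set.range rimEdge)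

lemma wheelGraph_adj_spoke (i : ZMod m) : (wheelGraph m).Adj (some i) none :=
  (fromEdgeSet_adj _).mpr ⟨Or.inl ⟨i, rfl⟩, Option.some_ne_none i⟩

lemma wheelGraph_adj_rimEdge (hm : m ≠ 1) (i : ZMod m) :
    (wheelGraph m).Adj (some i) (some (i + 1)) := by
  have : Nontrivial (ZMod m) := ZMod.nontrivial_iff.mpr hm
  exact (fromEdgeSet_adj _).mpr ⟨Or.inr ⟨i, rfl⟩, by simp⟩

lemma spoke_injective : (spoke : ZMod m → _).Injective := by
  intro i j hij
  simpa [spoke] using hij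

lemma rimEdge_injective (hm : 3 ≤ m) : (rimEdge : ZMod m → _).Injective := by
  have two_ne_zero : (2 : ZMod m) ≠ 0 := by
    rw [← Nat.cast_two, Ne, ZMod.natCast_eq_zero_iff]
    exact Nat.not_dvd_of_pos_of_lt two_pos hm
  intro i j hij
  simp only [rimEdge, Sym2.eq_iff, Option.some_inj] at hij
  rcases hij with ⟨hij, -⟩ | ⟨hi, hj⟩
  · exact hij
  · exact absurd (by linear_combination hj - hi) two_ne_zero

lemma spoke_ne_rimEdge (i j : ZMod m) : spoke i ≠ rimEdge j := by
  simp [spoke, rimEdge]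

/-- The coloring of the wheel in which the rim vertex `i` gives its color to its spoke and to
the rim edge towards its successor. The remaining pairs get the junk color `0`. -/
noncomputable def wheelColor (m : ℕ) : Sym2 (Option (ZMod m)) → ZMod m :=
  Function.extend (Sum.elim spoke rimEdge) (Sum.elim id id) 0

lemma sumElim_spoke_rimEdge_injective (hm : 3 ≤ m) :
    (Sum.elim spoke rimEdge : ZMod m ⊕ ZMod m → _).Injective :=
  spoke_injective.sumElim (rimEdge_injective hm) spoke_ne_rimEdge

lemma wheelColor_spoke (hm : 3 ≤ m) (i : ZMod m) : wheelColor m (spoke i) = i :=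
  (sumElim_spoke_rimEdge_injective hm).extend_apply _ _ (Sum.inl i)

lemma wheelColor_rimEdge (hm : 3 ≤ m) (i : ZMod m) : wheelColor m (rimEdge i) = i :=
  (sumElim_spoke_rimEdge_injective hm).extend_apply _ _ (Sum.inr i)

/-- The `d + 1` cyclically consecutive residues `i, i + 1, …, i + d`. -/
def arc (i : ZMod m) (d : ℕ) : Set (ZMod m) := (fun t : ℕ => i + t) '' Set.Iic d

lemma mem_arc {i x : ZMod m} {d : ℕ} : x ∈ arc i d ↔ ∃ t : ℕ, t ≤ d ∧ i + t = x := Iff.rfl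

lemma arc_zero (i : ZMod m) : arc i 0 = {i} := by
  ext x
  simp [mem_arc, eq_comm]

lemma arc_union_arc (i : ZMod m) (d e : ℕ) :
    arc i d ∪ arc (i + (d + 1 : ℕ)) e = arc i (d + 1 + e) := by
  ext x
  simp only [Set.mem_union, mem_arc]
  constructor
  · rintro (⟨t, ht, rfl⟩ | ⟨t, ht, rfl⟩)
    · exact ⟨t, by lia, rfl⟩
    · exact ⟨d + 1 + t, by lia, by rw [Nat.cast_add, add_assoc]⟩
  · rintro ⟨t, ht, rfl⟩
    rcases le_or_gt t d with htd | htd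
    · exact Or.inl ⟨t, htd, rfl⟩
    · obtain ⟨s, rfl⟩ := Nat.exists_eq_add_of_lt htd
      exact Or.inr ⟨s, by lia, by push_cast; ring⟩

lemma disjoint_arc_arc (i : ZMod m) {d e : ℕ} (h : d + 1 + e < m) :
    Disjoint (arc i d) (arc (i + (d + 1 : ℕ)) e) := by
  refine Set.disjoint_left.mpr ?_
  rintro _ ⟨s, hs, rfl⟩ ⟨t, ht, hst⟩
  rw [Set.mem_Iic] at hs ht
  have hcast : ((d + 1 + t : ℕ) : ZMod m) = s := by
    rw [Nat.cast_add]
    exact add_left_cancel ((add_assoc _ _ _).symm.trans hst)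
  have := Nat.ModEq.eq_of_lt_of_lt ((ZMod.natCast_eq_natCast_iff ..).mp hcast)
    (by lia) (by lia)
  lia

lemma arc_eq_univ [NeZero m] (i : ZMod m) {d : ℕ} (h : m ≤ d + 1) : arc i d = Set.univ := by
  refine Set.eq_univ_of_forall fun x => ⟨(x - i).val, ?_, by simp⟩
  exact Nat.le_of_lt_succ ((ZMod.val_lt _).trans_le h)

lemma exists_isPath_to_hub (hm : 3 ≤ m) (i : ZMod m) {d : ℕ} (hd : d < m) :
    ∃ p : (wheelGraph m).Walk (some i) none, p.IsPath ∧
      (∀ x, some x ∈ p.support → x ∈ arc i d) ∧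
      ∀ x ∈ arc i d, x ∈ p.edges.map (wheelColor m) := by
  induction d generalizing i with
  | zero =>
    refine ⟨(wheelGraph_adj_spoke i).toWalk, .of_adj _, ?_, ?_⟩
    · simp [arc_zero]
    · intro x hx
      obtain rfl : x = i := by simpa [arc_zero] using hx
      exact List.mem_singleton.mpr (wheelColor_spoke hm x).symm
  | succ d ih =>
    obtain ⟨p, hp, hsupp, hcol⟩ := ih (i + 1) (by lia)
    have harc : arc i (d + 1) = {i} ∪ arc (i + 1) d := by
      simpa [arc_zero, add_comm] using (arc_union_arc i 0 d).symm
    have hi : i ∉ arc (i + 1) d := by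
      simpa [arc_zero] using disjoint_arc_arc i (d := 0) (e := d) (by lia)
    refine ⟨.cons (wheelGraph_adj_rimEdge (by lia) i) p,
      hp.cons fun h => hi (hsupp i h), fun x hx => ?_, fun x hx => ?_⟩
    · rw [Walk.support_cons, List.mem_cons, Option.some_inj] at hx
      rw [harc]
      exact hx.imp_right (hsupp x)
    · rw [Walk.edges_cons, List.map_cons, List.mem_cons]
      rw [harc] at hx
      exact hx.imp (fun h => h.trans (wheelColor_rimEdge hm i).symm) (hcol x)

lemma exists_isPath_rim (hm : 3 ≤ m) {i j : ZMod m} (hij : i ≠ j) :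
    ∃ p : (wheelGraph m).Walk (some i) (some j), p.IsPath ∧
      ∀ x, x ∈ p.edges.map (wheelColor m) := by
  have : NeZero m := ⟨by lia⟩
  obtain ⟨d, e, hde, rfl⟩ : ∃ d e : ℕ, d + 1 + e + 1 = m ∧ i + (d + 1 : ℕ) = j := by
    have hpos : 0 < (j - i).val := ZMod.val_pos.mpr (sub_ne_zero.mpr hij.symm)
    have hlt := ZMod.val_lt (j - i)
    refine ⟨(j - i).val - 1, m - 1 - (j - i).val, by lia, ?_⟩
    rw [Nat.sub_add_cancel hpos, ZMod.natCast_zmod_val, add_sub_cancel]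
  obtain ⟨p, hp, hpsupp, hpcol⟩ := exists_isPath_to_hub hm i (d := d) (by lia)
  obtain ⟨q, hq, hqsupp, hqcol⟩ :=
    exists_isPath_to_hub hm (i + (d + 1 : ℕ)) (d := e) (by lia)
  have hmeet : ∀ x ∈ p.support, x ∈ q.reverse.support → x = none := by
    rintro (_ | x) hxp hxq
    · rfl
    · rw [Walk.support_reverse, List.mem_reverse] at hxq
      exact ((disjoint_arc_arc i (by lia)).notMem_of_mem_left (hpsupp x hxp) (hqsupp x hxq)).elim
  refine ⟨p.append q.reverse, isPath_append hp hq.reverse hmeet, fun x => ?_⟩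
  have hx : x ∈ arc i d ∪ arc (i + (d + 1 : ℕ)) e := by
    rw [arc_union_arc, arc_eq_univ i (by lia)]
    trivial
  rw [Walk.edges_append, List.map_append, List.mem_append, Walk.edges_reverse, List.map_reverse,
    List.mem_reverse]
  exact hx.imp (hpcol x) (hqcol x)

lemma isPanchromatic_wheelColor (hm : 3 ≤ m) : IsPanchromatic (wheelGraph m) (wheelColor m) := by
  have : NeZero m := ⟨by lia⟩
  have path_to_hub (i : ZMod m) : ∃ p : (wheelGraph m).Walk (some i) none, p.IsPath ∧
      ∀ x, x ∈ p.edges.map (wheelColor m) := by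
    obtain ⟨p, hp, -, hcol⟩ := exists_isPath_to_hub hm i (d := m - 1) (by lia)
    refine ⟨p, hp, fun x => hcol x ?_⟩
    rw [arc_eq_univ i (by lia)]
    trivial
  rintro (_ | i) (_ | j) hij
  · exact absurd rfl hij
  · obtain ⟨p, hp, hcol⟩ := path_to_hub j
    exact ⟨p.reverse, hp.reverse, by simpa using hcol⟩
  · exact path_to_hub i
  · exact exists_isPath_rim hm (ne_of_apply_ne some hij)

end Wheel

lemma exists_isPanchromatic_top {n k : ℕ} (hn : 4 ≤ n) (hk : k ≠ 0) (hkn : k + 1 ≤ n) :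
    ∃ c : Sym2 (Fin n) → Fin k, IsPanchromatic (⊤ : SimpleGraph (Fin n)) c := by
  obtain ⟨m, rfl⟩ : ∃ m, n = m + 1 := Nat.exists_eq_succ_of_ne_zero (by lia)
  have : NeZero k := ⟨hk⟩
  have : NeZero m := ⟨by lia⟩
  have φ : Option (ZMod m) ≃ Fin (m + 1) :=
    Fintype.equivFinOfCardEq (by rw [Fintype.card_option, ZMod.card])
  obtain ⟨f, hf⟩ : ∃ f : ZMod m → Fin k, f.Surjective := by
    refine ⟨fun x => Fin.ofNat k x.val, fun a => ⟨(a : ℕ), ?_⟩⟩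
    change Fin.ofNat k (a : ZMod m).val = a
    rw [ZMod.val_cast_of_lt (by lia), Fin.ofNat_val_eq_self]
  exact ⟨_, ((isPanchromatic_wheelColor (by lia)).comp_surjective hf).map_equiv φ
    fun _ _ h => φ.injective.ne h.ne⟩

theorem stmt_9 (k n : ℕ) (hk : 2 ≤ k) (hn : 4 ≤ n) (hkn : k + 1 ≤ n)
    {W : Type} (G : SimpleGraph W)
    (hsub : IsSubdivision (⊤ : SimpleGraph (Fin n)) G) :
    G.KColorConnectable k ∧ G.ccConn k = k := by
  obtain ⟨c₀, hc₀⟩ := exists_isPanchromatic_top hn (by lia : k ≠ 0) hkn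
  obtain ⟨c, hc⟩ := hsub.exists_isPanchromatic hc₀
  have : Nontrivial (Fin n) := Fin.nontrivial_iff_two_le.mpr (by lia)
  have : Nontrivial W := hsub.nontrivial
  have : Finite W := hsub.finite
  exact ⟨⟨_, hc.isKColorConnecting⟩, hc.ccConn_eq⟩
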